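/- For any integer k ≥ 1 and any 2-connected outerplanar simple graph G with maximum degree Δ(G) ≥ 7, we have ch_k(G) ≤ ⌊(Δ(G) − 2)/k⌋ + 3. -/

import Mathlib

open SimpleGraph

/-- A drawing of a simple graph in the plane: vertices are mapped to distinct points,
edges to arcs (injective continuous curves parametrised on `[0,1]`) joining the images of
their endpoints, whose interiors avoid the vertex points and each other. -/
structure PlaneEmbedding {V : Type*} (G : SimpleGraph V) where
  pos : V → ℝ × ℝ
  inj : Function.Injective pos
  arc : G.edgeSet → ℝ → ℝ × ℝ
  arc_cont : ∀ e, ContinuousOn (arc e) (Set.Icc 0 1)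
  arc_inj : ∀ e, Set.InjOn (arc e) (Set.Icc 0 1)
  arc_ends : ∀ e : G.edgeSet, ∃ u v : V, (e : Sym2 V) = s(u, v) ∧
      arc e 0 = pos u ∧ arc e 1 = pos v
  arc_avoid : ∀ e : G.edgeSet, ∀ t ∈ Set.Ioo (0:ℝ) 1, arc e t ∉ Set.range pos
  arc_disjoint : ∀ e f : G.edgeSet, e ≠ f → ∀ s ∈ Set.Ioo (0:ℝ) 1, ∀ t ∈ Set.Ioo (0:ℝ) 1,
      arc e s ≠ arc f t

/-- A graph is planar if it admits a drawing in the plane. -/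
def SimpleGraph.IsPlanar {V : Type*} (G : SimpleGraph V) : Prop :=
  Nonempty (PlaneEmbedding G)

/-- A graph is outerplanar if it admits a plane drawing with all vertices on the unit
circle and all edges inside the closed unit disk. -/
def SimpleGraph.IsOuterplanar {V : Type*} (G : SimpleGraph V) : Prop :=
  ∃ emb : PlaneEmbedding G, (∀ v, ‖emb.pos v‖ = 1) ∧
    ∀ e, ∀ t ∈ Set.Icc (0:ℝ) 1, ‖emb.arc e t‖ ≤ 1

/-- A `k`-frugal colouring: a proper vertex colouring in which no colour appears more than
`k` times in the neighbourhood of any vertex. -/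
def SimpleGraph.IsFrugalColoring {V α : Type*} (G : SimpleGraph V) (k : ℕ) (c : V → α) : Prop :=
  (∀ u v, G.Adj u v → c u ≠ c v) ∧
  ∀ (v : V) (a : α), {u | u ∈ G.neighborSet v ∧ c u = a}.ncard ≤ k

/-- The `k`-frugal choice number `ch_k(G)`: the least `t` such that any assignment of lists
of `t` integers to the vertices admits a `k`-frugal colouring from the lists. -/
noncomputable def SimpleGraph.frugalChoiceNumber {V : Type*} (G : SimpleGraph V) (k : ℕ) : ℕ :=
  sInf {t : ℕ | ∀ L : V → Finset ℤ, (∀ v, (L v).card = t) →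
    ∃ c : V → ℤ, (∀ v, c v ∈ L v) ∧ G.IsFrugalColoring k c}

/-!
If two edges of a drawing in the disk had interleaved ends on the circle, but disjoint arcs `f` and
`g`, then `f s - g t` would be a nonvanishing function on the unit square and have a continuous
logarithm there. Along each side of the square the change of its imaginary part is determined by
the ends of the arcs, and the four changes do not add up. Hence in the circular order of the
vertices no two edges cross, and by 2-connectedness `G` is a cycle with noncrossing chords.

The colouring is built by induction on the number of vertices. Let `v` have exactly two neighbours
`x` and `y`, which have at most `Δ - 2` further neighbours between them. Remove `v`, join `x` to `y`
and colour the rest. At most `⌊(Δ - 2) / k⌋` colours occur `k` times or more on these further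
neighbours, so avoiding them together with the colours of `x` and `y` leaves a colour for `v`.

Suppose there is no such `v`. By induction on its length, every chord `ab` spanning at least four
vertices has `Δ - 3` or more neighbours of `a`, and as many of `b`, beyond it. Indeed a vertex `f`
strictly between `a` and `b` with a long chord to one side would have `Δ - 3` neighbours on the
other side, hence a long chord there too, and so `2 (Δ - 3) > Δ` neighbours. So all chords at
vertices between `a` and `b` are short, and the vertices next to `a` and `b` would be reducible
unless `a` and `b` had that many outer neighbours. Closing up the cycle is an edge with nothing
beyond it, a contradiction.
-/

/-! ### Noncrossing order of an outerplanar drawing -/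

open scoped unitInterval

theorem exists_continuous_exp_eq {X : Type*} [TopologicalSpace X] [SimplyConnectedSpace X]
    [LocallyPathConnectedSpace X] (F : C(X, ℂ)) (hF : ∀ x, F x ≠ 0) :
    ∃ Γ : C(X, ℂ), ∀ x, Complex.exp (Γ x) = F x := by
  obtain ⟨x₀⟩ : Nonempty X := inferInstance
  obtain ⟨Γ, ⟨-, hΓ⟩, -⟩ := Complex.isCoveringMapOn_exp.existsUnique_continuousMap_lifts F
    (Complex.exp_log (hF x₀)) hF
  exact ⟨Γ, congrFun hΓ⟩

theorem sub_eq_log_sub_log {X : Type*} [TopologicalSpace X] [PreconnectedSpace X] {h w : X → ℂ}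
    (hh : Continuous h) (hw : Continuous w) {c : ℂ} (hexp : ∀ x, Complex.exp (h x) = c * w x)
    (hs : ∀ x, w x ∈ Complex.slitPlane) (x y : X) :
    h x - h y = Complex.log (w x) - Complex.log (w y) := by
  have hc (x : X) : Complex.exp (h x - Complex.log (w x)) = c := by
    have hne := Complex.slitPlane_ne_zero (hs x)
    rw [Complex.exp_sub, hexp, Complex.exp_log hne, mul_div_cancel_right₀ _ hne]
  have hconst : (fun x ↦ h x - Complex.log (w x)) = fun _ ↦ h y - Complex.log (w y) :=
    Complex.isCoveringMap_exp.eq_of_comp_eq (hh.sub (hw.clog hs)) continuous_const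
      (funext fun x ↦ Subtype.ext ((hc x).trans (hc y).symm)) y rfl
  linear_combination congrFun hconst x

theorem arg_neg_div_of_arg_lt {z w : ℂ} (hz : z ≠ 0) (hw : w ≠ 0) (h : z.arg < w.arg) :
    (-(w / z)).arg = w.arg - z.arg - Real.pi := by
  have hangle : ((-(w / z)).arg : Real.Angle) = (w.arg - z.arg - Real.pi : ℝ) := by
    rw [Complex.arg_neg_coe_angle (div_ne_zero hw hz), Complex.arg_div_coe_angle hw hz]
    simp only [Real.Angle.coe_sub, Real.Angle.sub_coe_pi_eq_add_coe_pi]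
  rw [← Complex.arg_coe_angle_toReal_eq_arg, hangle, Real.Angle.toReal_coe_eq_self_iff_mem_Ioc]
  constructor <;> linarith [Complex.arg_le_pi w, Complex.neg_pi_lt_arg z, Real.pi_pos]

theorem arg_one_add_sub_arg_one_add_inv {z : ℂ} (hz : z ∈ Complex.slitPlane) :
    (1 + z).arg - (1 + z⁻¹).arg = z.arg := by
  have hz0 := Complex.slitPlane_ne_zero hz
  have hz1 : 1 + z⁻¹ ≠ 0 := fun h0 ↦ by
    have : z = -1 := by
      field_simp at h0
      linear_combination h0
    norm_num [this, Complex.mem_slitPlane_iff] at hz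
  have hmul : 1 + z = z * (1 + z⁻¹) := by field_simp; ring
  have hsum : z.arg + (1 + z⁻¹).arg ∈ Set.Ioc (-Real.pi) Real.pi := by
    have him : (1 + z⁻¹).im = -z.im / Complex.normSq z := by simp [Complex.inv_im]
    have hns := Complex.normSq_pos.2 hz0
    rcases lt_trichotomy z.im 0 with h | h | h
    · have h1 : 0 ≤ (1 + z⁻¹).arg := by
        rw [Complex.arg_nonneg_iff, him]
        exact (div_pos (neg_pos.2 h) hns).le
      constructor <;>
        linarith [Complex.arg_neg_iff.2 h, Complex.neg_pi_lt_arg z, Complex.arg_le_pi (1 + z⁻¹)]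
    · have hre : 0 < z.re := by simpa [Complex.mem_slitPlane_iff, h] using hz
      have h1 : (1 + z⁻¹).arg = 0 := by
        rw [Complex.arg_eq_zero_iff, him, h, Complex.add_re, Complex.inv_re, Complex.one_re]
        exact ⟨by positivity, by simp⟩
      rw [h1, add_zero]
      exact Complex.arg_mem_Ioc z
    · have h1 : (1 + z⁻¹).arg < 0 := by
        rw [Complex.arg_neg_iff, him]
        exact div_neg_of_neg_of_pos (neg_neg_of_pos h) hns
      constructor <;>
        linarith [Complex.arg_nonneg_iff.2 h.le, Complex.arg_le_pi z,
          Complex.neg_pi_lt_arg (1 + z⁻¹)]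
  rw [hmul, Complex.arg_mul hz0 hz1 hsum, add_sub_cancel_right]

theorem arg_one_sub_div_sub_arg_one_sub_div {z w : ℂ} (hz : z ≠ 0) (hw : w ≠ 0)
    (h : z.arg < w.arg) :
    (1 - w / z).arg - (1 - z / w).arg = w.arg - z.arg - Real.pi := by
  have harg := arg_neg_div_of_arg_lt hz hw h
  have hslit : -(w / z) ∈ Complex.slitPlane := by
    refine Complex.mem_slitPlane_iff_arg.2 ⟨fun hpi ↦ ?_, neg_ne_zero.2 (div_ne_zero hw hz)⟩
    linarith [Complex.arg_le_pi w, Complex.neg_pi_lt_arg z]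
  rw [← harg, ← arg_one_add_sub_arg_one_add_inv hslit, inv_neg, inv_div, ← sub_eq_add_neg,
    ← sub_eq_add_neg]

/-- `p` is the last point of `K` on the ray from the origin through `p`. -/
def IsRadialMax {E : Type*} [SMul ℝ E] (K : Set E) (p : E) : Prop :=
  p ∈ K ∧ ∀ r : ℝ, 1 < r → r • p ∉ K

theorem isRadialMax_closedBall {E : Type*} [NormedAddCommGroup E] [NormedSpace ℝ E] {p : E}
    (hp : ‖p‖ = 1) : IsRadialMax (Metric.closedBall 0 1) p :=
  ⟨by simp [hp], fun r hr ↦ by simp [norm_smul, hp, hr.trans_le (le_abs_self r)]⟩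

namespace IsRadialMax

section Module

variable {E F : Type*} [AddCommGroup E] [Module ℝ E] [AddCommGroup F] [Module ℝ F] {K : Set E}
  {p q : E}

theorem image (h : IsRadialMax K p) {f : E →ₗ[ℝ] F} (hf : Function.Injective f) :
    IsRadialMax (f '' K) (f p) :=
  ⟨Set.mem_image_of_mem f h.1, fun r hr ↦ by
    rw [← map_smul, hf.mem_set_image]
    exact h.2 r hr⟩

theorem ne_zero (h : IsRadialMax K p) : p ≠ 0 := by
  rintro rfl
  exact h.2 2 one_lt_two (by simpa using h.1)

theorem eq_of_sameRay (hp : IsRadialMax K p) (hq : IsRadialMax K q) (h : SameRay ℝ p q) :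
    p = q := by
  obtain ⟨r, hr, rfl⟩ := h.exists_pos_left hp.ne_zero hq.ne_zero
  rcases lt_trichotomy r 1 with hr1 | rfl | hr1
  · refine absurd ?_ (hq.2 r⁻¹ ((one_lt_inv₀ hr).2 hr1))
    rw [inv_smul_smul₀ hr.ne']
    exact hp.1
  · rw [one_smul]
  · exact absurd hq.1 (hp.2 r hr1)

end Module

variable {K : Set ℂ} {p : ℂ}

theorem one_sub_div_mem_slitPlane (hp : IsRadialMax K p) {z : ℂ} (hz : z ∈ K) (hzp : z ≠ p) :
    1 - z / p ∈ Complex.slitPlane := by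
  by_contra hslit
  obtain ⟨hre, him⟩ : 1 ≤ (z / p).re ∧ (z / p).im = 0 := by
    simpa [Complex.mem_slitPlane_iff] using hslit
  have hzr : z = (z / p).re • p := by
    rw [Complex.real_smul, show ((z / p).re : ℂ) = z / p from Complex.ext rfl him.symm,
      div_mul_cancel₀ _ hp.ne_zero]
  rcases hre.eq_or_lt with h1 | h1
  · rw [← h1, one_smul] at hzr
    exact hzp hzr
  · exact hp.2 _ h1 (hzr ▸ hz)

theorem sub_eq_log_sub_log {X : Type*} [TopologicalSpace X] [PreconnectedSpace X]
    (hp : IsRadialMax K p) {h w : X → ℂ} (hh : Continuous h) (hw : Continuous w) {c : ℂ}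
    (hexp : ∀ x, Complex.exp (h x) = c * (p - w x)) (hK : ∀ x, w x ∈ K) (x y : X) :
    h x - h y = Complex.log (1 - w x / p) - Complex.log (1 - w y / p) := by
  refine _root_.sub_eq_log_sub_log (w := fun x ↦ 1 - w x / p) (c := c * p) hh (by fun_prop)
    (fun x ↦ ?_) (fun x ↦ hp.one_sub_div_mem_slitPlane (hK x) ?_) x y
  · have := hp.ne_zero
    rw [hexp]
    field_simp
  · intro heq
    simpa [heq] using hexp x

/- With `ν p q := arg (1 - q / p)`, a logarithm of `f s - g t` on the unit square changes by
`ν a d - ν a b`, `ν d c - ν d a`, `ν b c - ν b a` and `ν c d - ν c b` along the four sides. Both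
ways around the square give the same total, whereas `ν p q - ν q p = arg q - arg p - π`. -/
theorem not_disjoint_range_of_interleaved {a b c d : ℂ} (ha : IsRadialMax K a)
    (hb : IsRadialMax K b) (hc : IsRadialMax K c) (hd : IsRadialMax K d) (hab : a.arg < b.arg)
    (hbc : b.arg < c.arg) (hcd : c.arg < d.arg) {f : Path a c} {g : Path b d}
    (hf : Set.range f ⊆ K) (hg : Set.range g ⊆ K) : ¬ Disjoint (Set.range f) (Set.range g) := by
  intro hdisj
  have hf_mem (t : ℝ) : f.extend t ∈ Set.range f := f.extend_range ▸ Set.mem_range_self t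
  have hg_mem (t : ℝ) : g.extend t ∈ Set.range g := g.extend_range ▸ Set.mem_range_self t
  obtain ⟨Γ, hΓ⟩ := exists_continuous_exp_eq (X := ℝ × ℝ)
    ⟨fun x ↦ f.extend x.1 - g.extend x.2, by fun_prop⟩
    fun x ↦ sub_ne_zero.2 (hdisj.ne_of_mem (hf_mem x.1) (hg_mem x.2))
  simp only [ContinuousMap.coe_mk] at hΓ
  have left := ha.sub_eq_log_sub_log (h := fun t ↦ Γ (0, t)) (c := 1) (by fun_prop)
    g.continuous_extend (fun t ↦ by simp [hΓ]) (fun t ↦ hg (hg_mem t)) 1 0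
  have right := hc.sub_eq_log_sub_log (h := fun t ↦ Γ (1, t)) (c := 1) (by fun_prop)
    g.continuous_extend (fun t ↦ by simp [hΓ]) (fun t ↦ hg (hg_mem t)) 1 0
  have bottom := hb.sub_eq_log_sub_log (h := fun t ↦ Γ (t, 0)) (c := -1) (by fun_prop)
    f.continuous_extend (fun t ↦ by simp [hΓ]) (fun t ↦ hf (hf_mem t)) 1 0
  have top := hd.sub_eq_log_sub_log (h := fun t ↦ Γ (t, 1)) (c := -1) (by fun_prop)
    f.continuous_extend (fun t ↦ by simp [hΓ]) (fun t ↦ hf (hf_mem t)) 1 0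
  simp only [Path.extend_zero, Path.extend_one] at left right bottom top
  have hleft_top := congrArg Complex.im (congrArg₂ (· + ·) left top)
  have hbottom_right := congrArg Complex.im (congrArg₂ (· + ·) bottom right)
  simp only [Complex.add_im, Complex.sub_im, Complex.log_im] at hleft_top hbottom_right
  have νab := arg_one_sub_div_sub_arg_one_sub_div ha.ne_zero hb.ne_zero hab
  have νbc := arg_one_sub_div_sub_arg_one_sub_div hb.ne_zero hc.ne_zero hbc
  have νcd := arg_one_sub_div_sub_arg_one_sub_div hc.ne_zero hd.ne_zero hcd
  have νad := arg_one_sub_div_sub_arg_one_sub_div ha.ne_zero hd.ne_zero (hab.trans (hbc.trans hcd))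
  linarith [Real.pi_pos]

end IsRadialMax

/-- No two edges of the graph cross when its vertices are placed on a circle in their order. -/
def IsNoncrossing {V : Type*} [LT V] (G : SimpleGraph V) : Prop :=
  ∀ ⦃a b c d : V⦄, a < b → b < c → c < d → G.Adj a c → ¬ G.Adj b d

namespace PlaneEmbedding

variable {V : Type*} {G : SimpleGraph V} (E : PlaneEmbedding G)

theorem arc_zero_one {u v : V} (h : G.Adj u v) :
    E.arc ⟨s(u, v), h⟩ 0 = E.pos u ∧ E.arc ⟨s(u, v), h⟩ 1 = E.pos v ∨
      E.arc ⟨s(u, v), h⟩ 0 = E.pos v ∧ E.arc ⟨s(u, v), h⟩ 1 = E.pos u := by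
  obtain ⟨x, y, hxy, h0, h1⟩ := E.arc_ends ⟨s(u, v), h⟩
  rcases Sym2.eq_iff.1 hxy with ⟨rfl, rfl⟩ | ⟨rfl, rfl⟩
  · exact .inl ⟨h0, h1⟩
  · exact .inr ⟨h0, h1⟩

theorem exists_path {u v : V} (h : G.Adj u v) :
    ∃ f : Path (E.pos u) (E.pos v), Set.range f ⊆ E.arc ⟨s(u, v), h⟩ '' Set.Icc 0 1 := by
  have hcont : Continuous fun t : I ↦ E.arc ⟨s(u, v), h⟩ t :=
    continuousOn_iff_continuous_domRestrict.1 (E.arc_cont ⟨s(u, v), h⟩)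
  have hrange {x y : ℝ × ℝ} (f : Path x y) (hf : ∀ t : I, f t = E.arc ⟨s(u, v), h⟩ t) :
      Set.range f ⊆ E.arc ⟨s(u, v), h⟩ '' Set.Icc 0 1 := by
    rintro _ ⟨t, rfl⟩
    exact ⟨t, t.2, (hf t).symm⟩
  rcases E.arc_zero_one h with ⟨h0, h1⟩ | ⟨h0, h1⟩
  · exact ⟨⟨⟨_, hcont⟩, h0, h1⟩, hrange _ fun _ ↦ rfl⟩
  · let f : Path (E.pos v) (E.pos u) := ⟨⟨_, hcont⟩, h0, h1⟩
    exact ⟨f.symm, f.symm_range.trans_subset (hrange f fun _ ↦ rfl)⟩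

theorem arc_image_Icc {u v : V} (h : G.Adj u v) :
    E.arc ⟨s(u, v), h⟩ '' Set.Icc 0 1 =
      E.arc ⟨s(u, v), h⟩ '' Set.Ioo 0 1 ∪ {E.pos u, E.pos v} := by
  rw [← Set.Ioo_union_both zero_le_one, Set.image_union, Set.image_pair]
  rcases E.arc_zero_one h with ⟨h0, h1⟩ | ⟨h0, h1⟩
  · rw [h0, h1]
  · rw [h0, h1, Set.pair_comm]

theorem disjoint_arc {a b c d : V} (h : G.Adj a c) (h' : G.Adj b d) (hab : a ≠ b) (had : a ≠ d)
    (hcb : c ≠ b) (hcd : c ≠ d) :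
    Disjoint (E.arc ⟨s(a, c), h⟩ '' Set.Icc 0 1) (E.arc ⟨s(b, d), h'⟩ '' Set.Icc 0 1) := by
  have hedge : (⟨s(a, c), h⟩ : G.edgeSet) ≠ ⟨s(b, d), h'⟩ :=
    Subtype.coe_ne_coe.1 (by simp [hab, had])
  have havoid (e : G.edgeSet) (x y : V) :
      Disjoint (E.arc e '' Set.Ioo 0 1) {E.pos x, E.pos y} := by
    rw [Set.disjoint_left]
    rintro _ ⟨t, ht, rfl⟩ (heq | heq) <;> exact E.arc_avoid e t ht ⟨_, heq.symm⟩
  have hinterior : Disjoint (E.arc ⟨s(a, c), h⟩ '' Set.Ioo 0 1)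
      (E.arc ⟨s(b, d), h'⟩ '' Set.Ioo 0 1) := by
    rw [Set.disjoint_left]
    rintro _ ⟨s, hs, rfl⟩ ⟨t, ht, heq⟩
    exact E.arc_disjoint _ _ hedge s hs t ht heq.symm
  have hends : Disjoint ({E.pos a, E.pos c} : Set (ℝ × ℝ)) {E.pos b, E.pos d} := by
    simp [E.inj.eq_iff, hab.symm, had.symm, hcb.symm, hcd.symm]
  rw [E.arc_image_Icc, E.arc_image_Icc]
  simp only [Set.disjoint_union_left, Set.disjoint_union_right]
  exact ⟨⟨hinterior, (havoid _ _ _).symm⟩, havoid _ _ _, hends⟩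

end PlaneEmbedding

theorem exists_isNoncrossing_comap_of_isOuterplanar {V : Type*} [Fintype V] {G : SimpleGraph V}
    (hG : G.IsOuterplanar) : ∃ e : Fin (Fintype.card V) ≃ V, IsNoncrossing (G.comap e) := by
  obtain ⟨E, hE, hball⟩ := hG
  let toComplex : (ℝ × ℝ) ≃L[ℝ] ℂ := Complex.equivRealProdCLM.symm
  let K : Set ℂ := toComplex '' Metric.closedBall 0 1
  have hmax (v : V) : IsRadialMax K (toComplex (E.pos v)) :=
    (isRadialMax_closedBall (hE v)).image (f := toComplex.toLinearMap) toComplex.injective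
  have harcK {u v : V} (h : G.Adj u v) :
      toComplex '' (E.arc ⟨s(u, v), h⟩ '' Set.Icc 0 1) ⊆ K := by
    refine Set.image_mono (Set.image_subset_iff.2 fun t ht ↦ ?_)
    simpa using hball ⟨s(u, v), h⟩ t ht
  have harg : Function.Injective fun v ↦ (toComplex (E.pos v)).arg := fun u v h ↦
    E.inj (toComplex.injective ((hmax u).eq_of_sameRay (hmax v) (Complex.sameRay_of_arg_eq h)))
  let _ : LinearOrder V := LinearOrder.lift' _ harg
  let e : Fin (Fintype.card V) ≃o V := Fintype.orderIsoFinOfCardEq V rfl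
  refine ⟨e.toEquiv, fun a b c d hab hbc hcd hac hbd ↦ ?_⟩
  obtain ⟨f, hf⟩ := E.exists_path hac
  obtain ⟨g, hg⟩ := E.exists_path hbd
  have hf' : Set.range (f.map toComplex.continuous) ⊆ _ :=
    (Set.range_comp toComplex f).trans_subset (Set.image_mono hf)
  have hg' : Set.range (g.map toComplex.continuous) ⊆ _ :=
    (Set.range_comp toComplex g).trans_subset (Set.image_mono hg)
  refine IsRadialMax.not_disjoint_range_of_interleaved (hmax _) (hmax _) (hmax _) (hmax _)
    (e.strictMono hab) (e.strictMono hbc) (e.strictMono hcd) (hf'.trans (harcK hac))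
    (hg'.trans (harcK hbd)) (Set.disjoint_of_subset hf' hg' ?_)
  exact Set.disjoint_image_of_injective toComplex.injective <| E.disjoint_arc hac hbd
    (e.injective.ne hab.ne) (e.injective.ne (hab.trans (hbc.trans hcd)).ne)
    (e.injective.ne hbc.ne') (e.injective.ne hcd.ne)

/-! ### Frugal colourings and reducible vertices -/

section Frugal

variable {V W α : Type*} {k : ℕ}

theorem isFrugalColoring_of_injective {G : SimpleGraph V} {c : V → α} (hk : 1 ≤ k)
    (hc : Function.Injective c) : G.IsFrugalColoring k c := by
  refine ⟨fun u v h ↦ hc.ne h.ne, fun v a ↦ le_trans ?_ hk⟩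
  have hsub : {u | u ∈ G.neighborSet v ∧ c u = a}.Subsingleton :=
    fun _ hu _ hw ↦ hc (hu.2.trans hw.2.symm)
  exact (Set.ncard_le_one hsub.finite).2 hsub

theorem isFrugalColoring_of_comap {G : SimpleGraph V} {f : W → V} (hf : Function.Injective f)
    (hrange : G.support ⊆ Set.range f) {c : V → α}
    (h : (G.comap f).IsFrugalColoring k (c ∘ f)) : G.IsFrugalColoring k c := by
  refine ⟨fun u v huv ↦ ?_, fun v a ↦ ?_⟩
  · obtain ⟨u, rfl⟩ := hrange ⟨v, huv⟩
    obtain ⟨v, rfl⟩ := hrange ⟨_, huv.symm⟩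
    exact h.1 u v huv
  · by_cases hv : v ∈ Set.range f
    · obtain ⟨v, rfl⟩ := hv
      rw [← Set.ncard_preimage_of_injective_subset_range hf]
      · exact h.2 v a
      · exact fun u hu ↦ hrange ⟨_, hu.1.symm⟩
    · have hempty : {u | u ∈ G.neighborSet v ∧ c u = a} = ∅ :=
        Set.eq_empty_of_forall_notMem fun u hu ↦ hv (hrange ⟨u, hu.1⟩)
      rw [hempty, Set.ncard_empty]
      exact k.zero_le

theorem ncard_neighborSet_comap_le [Finite V] (G : SimpleGraph V) {f : W → V}
    (hf : Function.Injective f) (i : W) :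
    ((G.comap f).neighborSet i).ncard ≤ (G.neighborSet (f i)).ncard := by
  rw [← Set.ncard_image_of_injective _ hf]
  exact Set.ncard_le_ncard (Set.image_subset_iff.2 fun _ h ↦ h)

/-- The graph obtained from `G` by suppressing `v`: the edges at `v` are removed and `x`, `y` are
joined. The vertex `v` is kept, as an isolated vertex if `v ∉ {x, y}`. -/
def suppress (G : SimpleGraph V) (v x y : V) : SimpleGraph V :=
  G.deleteIncidenceSet v ⊔ edge x y

theorem suppress_adj {G : SimpleGraph V} {v x y : V} (hxy : x ≠ y) {i j : V} :
    (suppress G v x y).Adj i j ↔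
      (G.Adj i j ∧ i ≠ v ∧ j ≠ v) ∨ (i = x ∧ j = y ∨ i = y ∧ j = x) := by
  rw [suppress, sup_adj, deleteIncidenceSet_adj, edge_adj]
  grind

/-- `v` has exactly the two neighbours `x` and `y`, which have at most `D - 2` further neighbours
between them. In a graph of maximum degree `D` these are the vertices that can be coloured last. -/
structure IsReducible (G : SimpleGraph V) (D : ℕ) (v x y : V) : Prop where
  ne : x ≠ y
  neighborSet_eq : G.neighborSet v = {x, y}
  ncard_add_two_le : ((G.neighborSet x ∪ G.neighborSet y) \ {v, x, y}).ncard + 2 ≤ D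

theorem exists_mem_fiber_ncard_lt {s : Set V} (hs : s.Finite) (c : V → α) {A : Finset α}
    (h : s.ncard < A.card * k) : ∃ a ∈ A, {u ∈ s | c u = a}.ncard < k := by
  classical
  obtain ⟨a, ha, hlt⟩ := Finset.exists_card_fiber_lt_of_card_lt_mul (f := c)
    (by rwa [Set.ncard_eq_toFinset_card s hs] at h)
  rw [← Set.ncard_coe_finset] at hlt
  exact ⟨a, ha, by simpa using hlt⟩

namespace IsReducible

variable {G : SimpleGraph V} {D : ℕ} {v x y : V}

theorem adj_iff (h : IsReducible G D v x y) {u : V} : G.Adj v u ↔ u = x ∨ u = y := by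
  simpa using Set.ext_iff.1 h.neighborSet_eq u

theorem adj_left (h : IsReducible G D v x y) : G.Adj v x := h.adj_iff.2 (.inl rfl)

theorem adj_right (h : IsReducible G D v x y) : G.Adj v y := h.adj_iff.2 (.inr rfl)

theorem isFrugalColoring_update [Finite V] [DecidableEq V] (h : IsReducible G D v x y)
    (hk : 1 ≤ k) {c : V → α} (hc : (suppress G v x y).IsFrugalColoring k c) {a : α} (hx : a ≠ c x)
    (hy : a ≠ c y)
    (ha : {u ∈ (G.neighborSet x ∪ G.neighborSet y) \ {v, x, y} | c u = a}.ncard < k) :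
    G.IsFrugalColoring k (Function.update c v a) := by
  have hxy : c x ≠ c y := hc.1 x y ((suppress_adj h.ne).2 (.inr (.inl ⟨rfl, rfl⟩)))
  have hvx := h.adj_left.ne'
  have hvy := h.adj_right.ne'
  have hadj {i j : V} (hij : G.Adj i j) (hi : i ≠ v) (hj : j ≠ v) : (suppress G v x y).Adj i j :=
    (suppress_adj h.ne).2 (.inl ⟨hij, hi, hj⟩)
  refine ⟨fun u w huw ↦ ?_, fun u b ↦ ?_⟩
  · rcases eq_or_ne u v with rfl | hu
    · rcases h.adj_iff.1 huw with rfl | rfl <;> simp [*]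
    rcases eq_or_ne w v with rfl | hw
    · rcases h.adj_iff.1 huw.symm with rfl | rfl <;> simpa [*] using Ne.symm ‹_›
    simpa [hu, hw] using hc.1 u w (hadj huw hu hw)
  rcases eq_or_ne u v with rfl | hu
  · refine le_trans ((Set.ncard_le_one_iff_subsingleton).2 ?_) hk
    rw [h.neighborSet_eq]
    rintro i ⟨rfl | rfl, hi⟩ j ⟨rfl | rfl, hj⟩ <;> simp_all
  by_cases hub : G.Adj u v ∧ b = a
  · obtain ⟨huv, rfl⟩ := hub
    refine le_trans ((Set.ncard_le_ncard (t := insert v _) fun w hw ↦ ?_).trans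
      (Set.ncard_insert_le v _)) ha
    rcases eq_or_ne w v with rfl | hwv
    · exact .inl rfl
    rcases h.adj_iff.1 huv.symm with rfl | rfl <;>
      simp_all [Function.update_apply] <;> grind
  · refine (Set.ncard_le_ncard fun w hw ↦ ?_).trans (hc.2 u b)
    have hwv : w ≠ v := by
      rintro rfl
      exact hub ⟨hw.1, by simpa using hw.2.symm⟩
    exact ⟨hadj hw.1 hu hwv, by simpa [hwv] using hw.2⟩

theorem exists_isFrugalColoring_update [Finite V] [DecidableEq V] (h : IsReducible G D v x y)
    (hk : 1 ≤ k) {c : V → α} (hc : (suppress G v x y).IsFrugalColoring k c) {A : Finset α}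
    (hA : (D - 2) / k + 3 ≤ A.card) :
    ∃ a ∈ A, G.IsFrugalColoring k (Function.update c v a) := by
  classical
  have hcard : (D - 2) / k < (A \ {c x, c y}).card := by
    have := Finset.le_card_sdiff {c x, c y} A
    have := Finset.card_le_two (a := c x) (b := c y)
    omega
  have hlt : ((G.neighborSet x ∪ G.neighborSet y) \ {v, x, y}).ncard <
      (A \ {c x, c y}).card * k := by
    have := (Nat.div_lt_iff_lt_mul hk).1 hcard
    have := h.ncard_add_two_le
    omega
  obtain ⟨a, ha, hfib⟩ := exists_mem_fiber_ncard_lt (Set.toFinite _) c hlt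
  simp only [Finset.mem_sdiff, Finset.mem_insert, Finset.mem_singleton, not_or] at ha
  exact ⟨a, ha.1, h.isFrugalColoring_update hk hc ha.2.1 ha.2.2 hfib⟩

theorem ncard_neighborSet_suppress_le [Finite V] (h : IsReducible G D v x y) (i : V) :
    ((suppress G v x y).neighborSet i).ncard ≤ (G.neighborSet i).ncard := by
  have hswap {p q : V} (hp : G.Adj p v) (hN : (suppress G v x y).neighborSet p ⊆
      insert q (G.neighborSet p \ {v})) :
      ((suppress G v x y).neighborSet p).ncard ≤ (G.neighborSet p).ncard := by
    refine ((Set.ncard_le_ncard hN).trans (Set.ncard_insert_le _ _)).trans_eq ?_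
    exact Set.ncard_sdiff_singleton_add_one hp
  by_cases hi : i = x ∨ i = y
  · rcases hi with rfl | rfl
    · refine hswap (q := y) h.adj_left.symm fun j hj ↦ ?_
      have := (suppress_adj h.ne).1 hj
      grind [h.ne, mem_neighborSet]
    · refine hswap (q := x) h.adj_right.symm fun j hj ↦ ?_
      have := (suppress_adj h.ne).1 hj
      grind [h.ne, mem_neighborSet]
  · refine Set.ncard_le_ncard fun j hj ↦ ?_
    have := (suppress_adj h.ne).1 hj
    grind [mem_neighborSet]

end IsReducible

theorem exists_injective_mem_of_card_le {ι : Type*} [Fintype ι] (L : ι → Finset α)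
    (h : ∀ i, Fintype.card ι ≤ (L i).card) :
    ∃ c : ι → α, Function.Injective c ∧ ∀ i, c i ∈ L i := by
  classical
  refine (Finset.all_card_le_biUnion_card_iff_exists_injective L).1 fun s ↦ ?_
  rcases s.eq_empty_or_nonempty with rfl | ⟨i, hi⟩
  · simp
  · exact s.card_le_univ.trans
      ((h i).trans (Finset.card_le_card (Finset.subset_biUnion_of_mem L hi)))

end Frugal

/-! ### Cycles with noncrossing chords -/

theorem exists_adj_of_mem_of_notMem {V : Type*} {G : SimpleGraph V} {w p q : V}
    (h : (G.induce {u | u ≠ w}).Preconnected) {s : Set V} (hp : p ∈ s) (hq : q ∉ s) (hpw : p ≠ w)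
    (hqw : q ≠ w) : ∃ a ∈ s, ∃ b ∉ s, b ≠ w ∧ G.Adj a b := by
  obtain ⟨walk⟩ := h ⟨p, hpw⟩ ⟨q, hqw⟩
  obtain ⟨d, -, hd1, hd2⟩ := walk.exists_boundary_dart (Subtype.val ⁻¹' s) hp hq
  exact ⟨d.fst, hd1, d.snd, hd2, d.snd.2, d.adj⟩

namespace IsNoncrossing

section LinearOrder

variable {V : Type*} [LinearOrder V] {G : SimpleGraph V}

theorem comap {W : Type*} [Preorder W] (h : IsNoncrossing G) {f : W → V} (hf : StrictMono f) :
    IsNoncrossing (G.comap f) :=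
  fun _ _ _ _ hab hbc hcd ↦ h (hf hab) (hf hbc) (hf hcd)

theorem mem_Icc_of_adj (h : IsNoncrossing G) {a b f z : V} (hab : G.Adj a b) (haf : a < f)
    (hfb : f < b) (hfz : G.Adj f z) : z ∈ Set.Icc a b :=
  ⟨not_lt.1 fun hza ↦ h hza haf hfb hfz.symm hab, not_lt.1 fun hbz ↦ h haf hfb hbz hab hfz⟩

theorem suppress (h : IsNoncrossing G) {v x y : V} (hvx : G.Adj v x) (hvy : G.Adj v y)
    (hxy : x ≠ y) : IsNoncrossing (suppress G v x y) := by
  have hfst {a b c d : V} (hab : a < b) (hbc : b < c) (hcd : c < d) (hva : G.Adj v a)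
      (hvc : G.Adj v c) (hbv : b ≠ v) (hdv : d ≠ v) : ¬ G.Adj b d := by
    intro hbd
    by_cases hv : b < v ∧ v < d
    · exact not_lt.2 (h.mem_Icc_of_adj hbd hv.1 hv.2 hva).1 hab
    · have := h.mem_Icc_of_adj hbd hbc hcd hvc.symm
      grind
  have hsnd {a b c d : V} (hab : a < b) (hbc : b < c) (hcd : c < d) (hvb : G.Adj v b)
      (hvd : G.Adj v d) (hav : a ≠ v) (hcv : c ≠ v) : ¬ G.Adj a c := by
    intro hac
    by_cases hv : a < v ∧ v < c
    · exact not_lt.2 (h.mem_Icc_of_adj hac hv.1 hv.2 hvd).2 hcd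
    · have := h.mem_Icc_of_adj hac hab hbc hvb.symm
      grind
  intro a b c d hab hbc hcd hac hbd
  rw [suppress_adj hxy] at hac hbd
  rcases hac with ⟨hac, hav, hcv⟩ | hac
  · rcases hbd with ⟨hbd, -⟩ | ⟨rfl, rfl⟩ | ⟨rfl, rfl⟩
    · exact h hab hbc hcd hac hbd
    · exact hsnd hab hbc hcd hvx hvy hav hcv hac
    · exact hsnd hab hbc hcd hvy hvx hav hcv hac
  · rcases hbd with ⟨hbd, hbv, hdv⟩ | hbd
    · rcases hac with ⟨rfl, rfl⟩ | ⟨rfl, rfl⟩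
      · exact hfst hab hbc hcd hvx hvy hbv hdv hbd
      · exact hfst hab hbc hcd hvy hvx hbv hdv hbd
    · grind

end LinearOrder

variable {n : ℕ} {G : SimpleGraph (Fin n)}

theorem adj_of_adj_of_le (h : IsNoncrossing G)
    (hconn : ∀ v, (G.induce {u | u ≠ v}).Preconnected) {i j : Fin n} (hij : (i : ℕ) + 1 = j)
    (a b : Fin n) (hai : a ≤ i) (hjb : j ≤ b) (hab : G.Adj a b) : G.Adj i j := by
  rcases hai.lt_or_eq with hai | rfl
  · obtain ⟨u, hu, z, hz, hza, huz⟩ := exists_adj_of_mem_of_notMem (hconn a) (s := Set.Ioc a i)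
      (p := i) (q := j) (by simpa) (by simp; omega) (by omega) (by omega)
    simp only [Set.mem_Ioc] at hu hz
    have hzab := h.mem_Icc_of_adj hab hu.1 (by omega) huz
    simp only [Set.mem_Icc] at hzab
    have _ : (z : ℕ) - u < b - a := by omega
    exact adj_of_adj_of_le h hconn hij u z (by omega) (by omega) huz
  rcases hjb.lt_or_eq with hjb | rfl
  · obtain ⟨u, hu, z, hz, hzb, huz⟩ := exists_adj_of_mem_of_notMem (hconn b) (s := Set.Ico j b)
      (p := j) (q := a) (by simpa) (by simp; omega) (by omega) (by omega)
    simp only [Set.mem_Ico] at hu hz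
    have hzab := h.mem_Icc_of_adj hab (by omega) hu.2 huz
    simp only [Set.mem_Icc] at hzab
    have _ : (u : ℕ) - z < b - a := by omega
    exact adj_of_adj_of_le h hconn hij z u (by omega) (by omega) huz.symm
  exact hab
termination_by (b : ℕ) - a

end IsNoncrossing

/-- A graph whose vertices `0, …, n - 1` form a Hamiltonian cycle in this order, all remaining
edges being pairwise noncrossing chords of the cycle. -/
structure IsChordedCycle {n : ℕ} (G : SimpleGraph (Fin n)) : Prop where
  isNoncrossing : IsNoncrossing G
  adj_succ ⦃i j : Fin n⦄ : (i : ℕ) + 1 = j → G.Adj i j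
  adj_last ⦃i j : Fin n⦄ : (i : ℕ) = 0 → (j : ℕ) + 1 = n → G.Adj i j

theorem IsNoncrossing.isChordedCycle {n : ℕ} {G : SimpleGraph (Fin n)} (h : IsNoncrossing G)
    (hn : 3 ≤ n) (hconn : ∀ v, (G.induce {u | u ≠ v}).Preconnected) : IsChordedCycle G := by
  have hsucc ⦃i j : Fin n⦄ (hij : (i : ℕ) + 1 = j) : G.Adj i j := by
    obtain ⟨w, hiw, hjw⟩ : ∃ w : Fin n, i ≠ w ∧ j ≠ w := by
      rcases Nat.eq_zero_or_pos i with hi | hi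
      · exact ⟨⟨n - 1, by omega⟩, by grind, by grind⟩
      · exact ⟨⟨0, by omega⟩, by grind, by grind⟩
    obtain ⟨a, ha, b, hb, -, hab⟩ := exists_adj_of_mem_of_notMem (hconn w) (s := Set.Iic i)
      (p := i) (q := j) (by simp) (by simp; omega) hiw hjw
    simp only [Set.mem_Iic] at ha hb
    exact h.adj_of_adj_of_le hconn hij a b ha (by omega) hab
  refine ⟨h, hsucc, fun i j hi hj ↦ ?_⟩
  obtain ⟨w, hiw, hmax⟩ := Set.exists_max_image (G.neighborSet i) id (Set.toFinite _)
    ⟨⟨1, by omega⟩, hsucc (by simp [hi])⟩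
  have hw := hiw.ne
  rcases eq_or_ne w j with rfl | hwj
  · exact hiw
  obtain ⟨u, hu, z, hz, hzw, huz⟩ := exists_adj_of_mem_of_notMem (hconn w) (s := Set.Iio w)
    (p := i) (q := j) (by simp; omega) (by simp; omega) (by omega) (by omega)
  simp only [Set.mem_Iio] at hu hz
  rcases eq_or_ne u i with rfl | hui
  · have := hmax z huz
    simp only [id] at this
    omega
  · exact absurd huz (h (by omega) hu (by omega) hiw)

namespace IsReducible

theorem isChordedCycle_suppress {n D : ℕ} {G : SimpleGraph (Fin (n + 1))} {v x y : Fin (n + 1)}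
    (hr : IsReducible G D v x y) (h : IsChordedCycle G) (hn : 2 ≤ n) :
    IsChordedCycle ((suppress G v x y).comap v.succAbove) := by
  have hval (i : Fin n) : (v.succAbove i : ℕ) = if (i : ℕ) < v then (i : ℕ) else i + 1 := by
    simp only [Fin.succAbove, Fin.lt_def, Fin.val_castSucc]
    split_ifs <;> simp
  have hne (i : Fin n) : v.succAbove i ≠ v := v.succAbove_ne i
  have hkeep {i j : Fin n} (hij : G.Adj (v.succAbove i) (v.succAbove j)) :
      (suppress G v x y).Adj (v.succAbove i) (v.succAbove j) :=
    (suppress_adj hr.ne).2 (.inl ⟨hij, hne i, hne j⟩)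
  have hjoin {p q : Fin (n + 1)} (hp : G.Adj v p) (hq : G.Adj v q) (hpq : p ≠ q) :
      (suppress G v x y).Adj p q :=
    (suppress_adj hr.ne).2 (.inr (by have := hr.adj_iff.1 hp; have := hr.adj_iff.1 hq; grind))
  refine ⟨(h.isNoncrossing.suppress hr.adj_left hr.adj_right hr.ne).comap
    (Fin.strictMono_succAbove v), fun i j hij ↦ ?_, fun i j hi hj ↦ ?_⟩
  · have hi := hval i
    have hj := hval j
    by_cases hv : (v : ℕ) = i + 1
    · exact hjoin (h.adj_succ (by grind)).symm (h.adj_succ (by grind)) (by grind)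
    · exact hkeep (h.adj_succ (by grind))
  · have hi' := hval i
    have hj' := hval j
    by_cases hv0 : (v : ℕ) = 0
    · exact hjoin (h.adj_succ (by grind)) (h.adj_last hv0 (by grind)) (by grind)
    by_cases hvn : (v : ℕ) = n
    · exact hjoin (h.adj_last (by grind) (by grind)).symm (h.adj_succ (by grind)).symm (by grind)
    · exact hkeep (h.adj_last (by grind) (by grind))

end IsReducible

/-! ### Long chords -/

/- `u`, `s`, `t`, `r` are consecutive vertices starting at one end `u` of a chord `uw`; `r = w` if
the chord spans only four vertices. If `s ≁ w`, then `s` has degree two, and it can fail to be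
reducible only because `u` has many neighbours beyond the chord. -/
theorem exists_isReducible_or_le_ncard {V : Type*} [Finite V] {G : SimpleGraph V} {D : ℕ}
    (hdeg : ∀ v, (G.neighborSet v).ncard ≤ D) {u s t r w : V} (hus : G.Adj u s) (hst : G.Adj s t)
    (htr : G.Adj t r) (huw : G.Adj u w) (hut : u ≠ t) (hwt : w ≠ t)
    (hs : ∀ z, G.Adj s z → z = u ∨ z = t ∨ z = w ∧ r = w)
    (ht : ∀ z, G.Adj t z → z = u ∨ z = s ∨ z = r ∨ z = w) (hcross : G.Adj s w → ¬ G.Adj u t) :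
    (∃ v x y, IsReducible G D v x y) ∨ D ≤ (G.neighborSet u \ {s, t, w}).ncard + 3 := by
  by_cases hsw : G.Adj s w
  · obtain rfl : r = w := by grind [huw.ne]
    have htu_adj : ¬ G.Adj t u := fun h ↦ hcross hsw h.symm
    refine .inl ⟨t, r, s, hsw.ne', ?_, ?_⟩
    · ext z
      have := ht z
      grind [mem_neighborSet, hst.symm]
    · have hsub : (G.neighborSet r ∪ G.neighborSet s) \ {t, r, s} ⊆
          (G.neighborSet r \ {s}) \ {t} := by
        intro z hz
        have := hs z
        grind [mem_neighborSet, huw.symm]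
      have hle := Set.ncard_le_ncard hsub
      have hs_mem : s ∈ G.neighborSet r := hsw.symm
      have ht_mem : t ∈ G.neighborSet r \ {s} := ⟨htr.symm, hst.ne'⟩
      have hcard := Set.ncard_sdiff_singleton_add_one hs_mem
      have hcard' := Set.ncard_sdiff_singleton_add_one ht_mem
      have := hdeg r
      omega
  · by_contra! hnot
    refine hnot.1 s u t ⟨hut, ?_, ?_⟩
    · ext z
      have := hs z
      grind [mem_neighborSet, hus.symm]
    · have hsub : (G.neighborSet u ∪ G.neighborSet t) \ {s, u, t} ⊆
          (G.neighborSet u \ {s, t, w}) ∪ {r, w} := by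
        intro z hz
        have := ht z
        grind [mem_neighborSet]
      have hle := (Set.ncard_le_ncard hsub).trans (Set.ncard_union_le _ _)
      have hpair := Set.ncard_insert_le r {w}
      rw [Set.ncard_singleton] at hpair
      omega

theorem ncard_le_card_of_forall_val_mem {n : ℕ} {s : Set (Fin n)} {T : Finset ℕ}
    (h : ∀ i ∈ s, (i : ℕ) ∈ T) : s.ncard ≤ T.card := by
  rw [← Set.ncard_image_of_injective s Fin.val_injective, ← Set.ncard_coe_finset]
  exact Set.ncard_le_ncard (Set.image_subset_iff.2 h)

/-- Both ends of the chord `ab` have at least `D - 3` neighbours outside the interval `[a, b]`. -/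
def IsHeavy {n : ℕ} (G : SimpleGraph (Fin n)) (D : ℕ) (a b : Fin n) : Prop :=
  D ≤ (G.neighborSet a \ Set.Icc a b).ncard + 3 ∧ D ≤ (G.neighborSet b \ Set.Icc a b).ncard + 3

section LongChords

variable {n D : ℕ} {G : SimpleGraph (Fin n)} {a b f z : Fin n}

theorem le_ncard_inter_Iio
    (hheavy : ∀ z, G.Adj f z → (f : ℕ) + 3 ≤ z → IsHeavy G D f z) (hfz : G.Adj f z)
    (hz : (f : ℕ) + 3 ≤ z) : D ≤ (G.neighborSet f ∩ Set.Iio f).ncard + 3 := by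
  obtain ⟨m, hm, hmax⟩ := Set.exists_max_image (G.neighborSet f) id (Set.toFinite _) ⟨z, hfz⟩
  have hzm := hmax z hfz
  simp only [id] at hzm
  have hsub : G.neighborSet f \ Set.Icc f m ⊆ G.neighborSet f ∩ Set.Iio f := by
    rintro j ⟨hj, hjm⟩
    exact ⟨hj, not_le.1 fun hfj ↦ hjm ⟨hfj, hmax j hj⟩⟩
  exact (hheavy m hm (by omega)).1.trans (Nat.add_le_add_right (Set.ncard_le_ncard hsub) 3)

theorem le_ncard_inter_Ioi
    (hheavy : ∀ z, G.Adj z f → (z : ℕ) + 3 ≤ f → IsHeavy G D z f) (hzf : G.Adj z f)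
    (hz : (z : ℕ) + 3 ≤ f) : D ≤ (G.neighborSet f ∩ Set.Ioi f).ncard + 3 := by
  obtain ⟨m, hm, hmin⟩ := Set.exists_min_image (G.neighborSet f) id (Set.toFinite _)
    ⟨z, hzf.symm⟩
  have hzm := hmin z hzf.symm
  simp only [id] at hzm
  have hsub : G.neighborSet f \ Set.Icc m f ⊆ G.neighborSet f ∩ Set.Ioi f := by
    rintro j ⟨hj, hjm⟩
    exact ⟨hj, not_le.1 fun hfj ↦ hjm ⟨hmin j hj, hfj⟩⟩
  exact (hheavy m hm.symm (by omega)).2.trans (Nat.add_le_add_right (Set.ncard_le_ncard hsub) 3)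

theorem exists_long_left (hD : 6 ≤ D) (h : D ≤ (G.neighborSet f ∩ Set.Iio f).ncard + 3) :
    ∃ z, G.Adj z f ∧ (z : ℕ) + 3 ≤ f := by
  by_contra! hshort
  have := ncard_le_card_of_forall_val_mem (s := G.neighborSet f ∩ Set.Iio f)
    (T := {(f : ℕ) - 1, (f : ℕ) - 2}) fun i hi ↦ by
      have := hshort i hi.1.symm
      have : i < f := hi.2
      simp only [Finset.mem_insert, Finset.mem_singleton]
      omega
  have := Finset.card_le_two (a := (f : ℕ) - 1) (b := (f : ℕ) - 2)
  omega

theorem exists_long_right (hD : 6 ≤ D) (h : D ≤ (G.neighborSet f ∩ Set.Ioi f).ncard + 3) :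
    ∃ z, G.Adj f z ∧ (f : ℕ) + 3 ≤ z := by
  by_contra! hshort
  have := ncard_le_card_of_forall_val_mem (s := G.neighborSet f ∩ Set.Ioi f)
    (T := {(f : ℕ) + 1, (f : ℕ) + 2}) fun i hi ↦ by
      have := hshort i hi.1
      have : f < i := hi.2
      simp only [Finset.mem_insert, Finset.mem_singleton]
      omega
  have := Finset.card_le_two (a := (f : ℕ) + 1) (b := (f : ℕ) + 2)
  omega

end LongChords

namespace IsChordedCycle

variable {n D : ℕ} {G : SimpleGraph (Fin n)}

section Interior

variable {a b : Fin n}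

theorem interior_adj_near (h : IsChordedCycle G) (hD : 7 ≤ D)
    (hdeg : ∀ v, (G.neighborSet v).ncard ≤ D) (hab : G.Adj a b)
    (hheavy : ∀ c d, G.Adj c d → (c : ℕ) + 3 ≤ d → (d : ℕ) - c < b - a → IsHeavy G D c d)
    {f z : Fin n} (haf : a < f) (hfb : f < b) (hfz : G.Adj f z) :
    (z : ℕ) ≤ f + 2 ∧ (f : ℕ) ≤ z + 2 := by
  have hIcc {z} (hz : G.Adj f z) : a ≤ z ∧ z ≤ b := h.isNoncrossing.mem_Icc_of_adj hab haf hfb hz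
  have hleft (hlong : ∃ z, G.Adj f z ∧ (f : ℕ) + 3 ≤ z) :
      D ≤ (G.neighborSet f ∩ Set.Iio f).ncard + 3 := by
    obtain ⟨z, hz, hfz⟩ := hlong
    refine le_ncard_inter_Iio (fun d hd hfd ↦ hheavy f d hd hfd ?_) hz hfz
    have := hIcc hd
    omega
  have hright (hlong : ∃ z, G.Adj z f ∧ (z : ℕ) + 3 ≤ f) :
      D ≤ (G.neighborSet f ∩ Set.Ioi f).ncard + 3 := by
    obtain ⟨z, hz, hzf⟩ := hlong
    refine le_ncard_inter_Ioi (fun c hc hcf ↦ hheavy c f hc hcf ?_) hz hzf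
    have := hIcc hc.symm
    omega
  have hnot_both (hl : D ≤ (G.neighborSet f ∩ Set.Iio f).ncard + 3)
      (hr : D ≤ (G.neighborSet f ∩ Set.Ioi f).ncard + 3) : False := by
    have hdisj : Disjoint (G.neighborSet f ∩ Set.Iio f) (G.neighborSet f ∩ Set.Ioi f) :=
      Set.disjoint_left.2 fun _ hl hr ↦ lt_asymm (Set.mem_Iio.1 hl.2) hr.2
    have hunion := Set.ncard_union_eq hdisj
    have hle := Set.ncard_le_ncard
      (Set.union_subset (s := G.neighborSet f ∩ Set.Iio f) (t := G.neighborSet f ∩ Set.Ioi f)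
        Set.inter_subset_left Set.inter_subset_left)
    have := hdeg f
    omega
  constructor
  · by_contra! hlong
    have hl := hleft ⟨z, hfz, by omega⟩
    exact hnot_both hl (hright (exists_long_left (by omega) hl))
  · by_contra! hlong
    have hr := hright ⟨z, hfz.symm, by omega⟩
    exact hnot_both (hleft (exists_long_right (by omega) hr)) hr

theorem isReducible_of_near (h : IsChordedCycle G) (hD : 6 ≤ D) {x v y : Fin n}
    (hxv : (x : ℕ) + 1 = v) (hvy : (v : ℕ) + 1 = y) (hxy : G.Adj x y)
    (hx : ∀ z, G.Adj x z → (z : ℕ) ≤ x + 2 ∧ (x : ℕ) ≤ z + 2)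
    (hy : ∀ z, G.Adj y z → (z : ℕ) ≤ y + 2 ∧ (y : ℕ) ≤ z + 2) : IsReducible G D v x y := by
  refine ⟨hxy.ne, ?_, ?_⟩
  · ext z
    simp only [mem_neighborSet, Set.mem_insert_iff, Set.mem_singleton_iff]
    refine ⟨fun hz ↦ ?_, ?_⟩
    · have hmem := h.isNoncrossing.mem_Icc_of_adj hxy (by omega) (by omega) hz
      have := hz.ne
      simp only [Set.mem_Icc] at hmem
      omega
    · rintro (rfl | rfl)
      · exact (h.adj_succ hxv).symm
      · exact h.adj_succ hvy
  · have hcard := ncard_le_card_of_forall_val_mem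
      (s := (G.neighborSet x ∪ G.neighborSet y) \ {v, x, y})
      (T := {(x : ℕ) - 2, (x : ℕ) - 1, (x : ℕ) + 3, (x : ℕ) + 4}) fun z ⟨hz, hne⟩ ↦ by
        simp only [Set.mem_insert_iff, Set.mem_singleton_iff, not_or] at hne
        simp only [Finset.mem_insert, Finset.mem_singleton]
        rcases hz with hz | hz
        · have := hx z hz
          omega
        · have := hy z hz
          omega
    have := Finset.card_le_four (a := (x : ℕ) - 2) (b := (x : ℕ) - 1) (c := (x : ℕ) + 3)
      (d := (x : ℕ) + 4)
    omega

theorem interior_adj (h : IsChordedCycle G) (hD : 6 ≤ D)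
    (hirr : ∀ v x y, ¬ IsReducible G D v x y) (hab : G.Adj a b)
    (hnear : ∀ f z, a < f → f < b → G.Adj f z → (z : ℕ) ≤ f + 2 ∧ (f : ℕ) ≤ z + 2)
    {f z : Fin n} (haf : a < f) (hfb : f < b) (hfz : G.Adj f z) :
    (z : ℕ) = f + 1 ∨ (f : ℕ) = z + 1 ∨ (z = a ∧ (f : ℕ) = a + 2) ∨ (z = b ∧ (f : ℕ) + 2 = b) := by
  have hdist_two {x y : Fin n} (hx : a < x) (hy : y < b) (hxy : (x : ℕ) + 2 = y) : ¬ G.Adj x y :=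
    fun hadj ↦ hirr ⟨x + 1, by omega⟩ x y <| h.isReducible_of_near hD rfl (by simp; omega) hadj
      (fun z ↦ hnear x z hx (by omega)) fun z ↦ hnear y z (by omega) hy
  have hfz_near := hnear f z haf hfb hfz
  have hz := h.isNoncrossing.mem_Icc_of_adj hab haf hfb hfz
  have hne := hfz.ne
  simp only [Set.mem_Icc] at hz
  by_contra! hcon
  by_cases hzf : z < f
  · exact hdist_two (x := z) (by omega) hfb (by omega) hfz.symm
  · exact hdist_two (y := z) haf (by omega) (by omega) hfz

theorem isHeavy_of_interior_adj (h : IsChordedCycle G)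
    (hdeg : ∀ v, (G.neighborSet v).ncard ≤ D) (hirr : ∀ v x y, ¬ IsReducible G D v x y)
    (hab : G.Adj a b) (hlen : (a : ℕ) + 3 ≤ b)
    (hint : ∀ f z, a < f → f < b → G.Adj f z → (z : ℕ) = f + 1 ∨ (f : ℕ) = z + 1 ∨
      (z = a ∧ (f : ℕ) = a + 2) ∨ (z = b ∧ (f : ℕ) + 2 = b)) : IsHeavy G D a b := by
  have hirr' : ¬ ∃ v x y, IsReducible G D v x y := by simpa using hirr
  constructor
  · let s : Fin n := ⟨a + 1, by omega⟩
    let t : Fin n := ⟨a + 2, by omega⟩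
    let r : Fin n := ⟨a + 3, by omega⟩
    have hend := (exists_isReducible_or_le_ncard hdeg (s := s) (t := t) (r := r)
      (h.adj_succ rfl) (h.adj_succ rfl) (h.adj_succ rfl) hab (by grind) (by grind)
      (fun z hz ↦ by have := hint s z (by grind) (by grind) hz; grind)
      (fun z hz ↦ by have := hint t z (by grind) (by grind) hz; grind)
      (fun hsb hat ↦ h.isNoncrossing (by grind) (by grind) (by grind) hat hsb)).resolve_left hirr'
    refine hend.trans (Nat.add_le_add_right (Set.ncard_le_ncard ?_) 3)
    rintro z ⟨hz, hne⟩
    refine ⟨hz, fun hzab ↦ ?_⟩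
    have := hint z a
    grind [mem_neighborSet, G.adj_comm, hz.ne]
  · let s : Fin n := ⟨b - 1, by omega⟩
    let t : Fin n := ⟨b - 2, by omega⟩
    let r : Fin n := ⟨b - 3, by omega⟩
    have hend := (exists_isReducible_or_le_ncard hdeg (s := s) (t := t) (r := r)
      (h.adj_succ (by grind)).symm (h.adj_succ (by grind)).symm (h.adj_succ (by grind)).symm
      hab.symm (by grind) (by grind)
      (fun z hz ↦ by have := hint s z (by grind) (by grind) hz; grind)
      (fun z hz ↦ by have := hint t z (by grind) (by grind) hz; grind)
      (fun hsa hbt ↦ h.isNoncrossing (by grind) (by grind) (by grind) hsa.symm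
        hbt.symm)).resolve_left hirr'
    refine hend.trans (Nat.add_le_add_right (Set.ncard_le_ncard ?_) 3)
    rintro z ⟨hz, hne⟩
    refine ⟨hz, fun hzab ↦ ?_⟩
    have := hint z b
    grind [mem_neighborSet, G.adj_comm, hz.ne]

end Interior

theorem isHeavy (h : IsChordedCycle G) (hD : 7 ≤ D) (hdeg : ∀ v, (G.neighborSet v).ncard ≤ D)
    (hirr : ∀ v x y, ¬ IsReducible G D v x y) (a b : Fin n) (hab : G.Adj a b)
    (hlen : (a : ℕ) + 3 ≤ b) : IsHeavy G D a b :=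
  h.isHeavy_of_interior_adj hdeg hirr hab hlen fun _ _ ↦
    h.interior_adj (by omega) hirr hab fun _ _ ↦
      h.interior_adj_near hD hdeg hab fun c d hcd hlong _ ↦
        isHeavy h hD hdeg hirr c d hcd hlong
termination_by (b : ℕ) - a

theorem exists_isReducible (h : IsChordedCycle G) (hn : 4 ≤ n) (hD : 7 ≤ D)
    (hdeg : ∀ v, (G.neighborSet v).ncard ≤ D) : ∃ v x y, IsReducible G D v x y := by
  by_contra! hirr
  let a : Fin n := ⟨0, by omega⟩
  let b : Fin n := ⟨n - 1, by omega⟩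
  have hheavy := h.isHeavy hD hdeg hirr a b (h.adj_last rfl (by simp [b]; omega))
    (by simp [a, b]; omega)
  have hempty : G.neighborSet a \ Set.Icc a b = ∅ :=
    Set.sdiff_eq_empty.2 fun i _ ↦ ⟨by simp [a, Fin.le_def], by simp [b, Fin.le_def]; omega⟩
  have := hheavy.1
  rw [hempty, Set.ncard_empty] at this
  omega

theorem exists_isFrugalColoring {α : Type*} {k : ℕ} (hk : 1 ≤ k) (hD : 7 ≤ D)
    (h : IsChordedCycle G) (hn : 3 ≤ n) (hdeg : ∀ v, (G.neighborSet v).ncard ≤ D)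
    (L : Fin n → Finset α) (hL : ∀ i, (D - 2) / k + 3 ≤ (L i).card) :
    ∃ c : Fin n → α, (∀ i, c i ∈ L i) ∧ G.IsFrugalColoring k c := by
  induction n, hn using Nat.le_induction with
  | base =>
    obtain ⟨c, hinj, hc⟩ := exists_injective_mem_of_card_le L fun i ↦
      (Fintype.card_fin 3).trans_le ((Nat.le_add_left 3 _).trans (hL i))
    exact ⟨c, hc, isFrugalColoring_of_injective hk hinj⟩
  | succ n hn ih =>
    obtain ⟨v, x, y, hr⟩ := h.exists_isReducible (by omega) hD hdeg
    obtain ⟨c, hc, hfrugal⟩ := ih (hr.isChordedCycle_suppress h (by omega))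
      (fun i ↦ (ncard_neighborSet_comap_le _ v.succAbove_right_injective i).trans
        ((hr.ncard_neighborSet_suppress_le _).trans (hdeg _)))
      (fun i ↦ L (v.succAbove i)) fun i ↦ hL _
    obtain ⟨a₀, -⟩ : (L v).Nonempty := Finset.card_pos.1 (Nat.zero_lt_of_lt (hL v))
    have hsupp : (suppress G v x y).support ⊆ Set.range v.succAbove := by
      rintro i ⟨j, hij⟩
      rw [Fin.range_succAbove, Set.mem_compl_singleton_iff]
      rcases (suppress_adj hr.ne).1 hij with ⟨-, hi, -⟩ | ⟨rfl, -⟩ | ⟨rfl, -⟩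
      · exact hi
      · exact hr.adj_left.ne'
      · exact hr.adj_right.ne'
    have hext : (suppress G v x y).IsFrugalColoring k (v.insertNth a₀ c : Fin (n + 1) → α) :=
      isFrugalColoring_of_comap v.succAbove_right_injective hsupp
        (by simpa only [Function.comp_def, Fin.insertNth_apply_succAbove] using hfrugal)
    obtain ⟨a, ha, hcol⟩ := hr.exists_isFrugalColoring_update hk hext (hL v)
    rw [Fin.update_insertNth] at hcol
    refine ⟨_, fun i ↦ ?_, hcol⟩
    rcases eq_or_ne i v with rfl | hi
    · simpa using ha
    · obtain ⟨j, rfl⟩ := Fin.exists_succAbove_eq hi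
      simpa using hc j

end IsChordedCycle

theorem connected_induce_comap_ne {V W : Type*} {G : SimpleGraph V} (e : W ≃ V) {w : W}
    (h : (G.induce {u | u ≠ e w}).Connected) : ((G.comap e).induce {u | u ≠ w}).Connected := by
  let iso : (G.comap e).induce {u | u ≠ w} ≃g G.induce {u | u ≠ e w} :=
    { toEquiv := e.subtypeEquiv fun a ↦ by simp
      map_rel_iff' := by simp }
  exact iso.connected_iff.2 h

theorem frugal_outerplanar_two_connected_general {k D : ℕ} (hk : 1 ≤ k) {V : Type*} [Fintype V]
    (G : SimpleGraph V) [DecidableRel G.Adj] (hG : G.IsOuterplanar) (hcard : 3 ≤ Fintype.card V)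
    (h2conn : ∀ v : V, (G.induce {u : V | u ≠ v}).Connected) (hD : 7 ≤ D) (hΔ : G.maxDegree ≤ D)
    {α : Type*} (L : V → Finset α) (hL : ∀ v, (D - 2) / k + 3 ≤ (L v).card) :
    ∃ c : V → α, (∀ v, c v ∈ L v) ∧ G.IsFrugalColoring k c := by
  obtain ⟨e, he⟩ := exists_isNoncrossing_comap_of_isOuterplanar hG
  have hcycle : IsChordedCycle (G.comap e) := he.isChordedCycle hcard fun i ↦
    (connected_induce_comap_ne e (h2conn (e i))).preconnected
  have hdeg (i) : ((G.comap e).neighborSet i).ncard ≤ D := by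
    refine (ncard_neighborSet_comap_le G e.injective i).trans (le_trans ?_ hΔ)
    rw [Set.ncard_eq_toFinset_card']
    exact G.degree_le_maxDegree (e i)
  obtain ⟨c, hc, hfrugal⟩ :=
    hcycle.exists_isFrugalColoring hk hD hcard hdeg (L ∘ e) fun i ↦ hL (e i)
  refine ⟨c ∘ e.symm, fun v ↦ by simpa using hc (e.symm v), ?_⟩
  refine isFrugalColoring_of_comap e.injective (by simp) ?_
  simpa [Function.comp_assoc] using hfrugal

/-- For any `k ≥ 1` and 2-connected outerplanar graph `G` with `Δ(G) ≥ 7`,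
`ch_k(G) ≤ ⌊(Δ(G) - 2)/k⌋ + 3`. Here 2-connected means: at least three vertices, and the
graph stays connected after deleting any single vertex. -/
theorem frugal_outerplanar_two_connected (k : ℕ) (hk : 1 ≤ k) {V : Type*} [Fintype V]
    (G : SimpleGraph V) [DecidableRel G.Adj] (hG : G.IsOuterplanar)
    (hcard : 3 ≤ Fintype.card V)
    (h2conn : ∀ v : V, (G.induce {u : V | u ≠ v}).Connected)
    (hΔ : 7 ≤ G.maxDegree) :
    G.frugalChoiceNumber k ≤ (G.maxDegree - 2) / k + 3 :=
  Nat.sInf_le fun L hL ↦ frugal_outerplanar_two_connected_general hk G hG hcard h2conn hΔ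
    le_rfl L fun v ↦ (hL v).ge
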